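/- arXiv:2406.07311 — 2 statements merged into one kernel-verified Lean document; each statement's English description precedes it below -/
import Mathlib

section
/- Let n ≥ 3 and let λ be a partition of n. Then Σ_{π ∈ C_λ} occ₍[₂₁₋₃)₎(π) = |C_λ| · ( (n−2)/6 + (n−3)(n−4)·X₁/(6n(n−1)) + X₂/(3n) − (n−2)·X₃/(n(n−1)) ), where occ₍[₂₁₋₃)₎(π) = #{k : 2 < k ≤ n, π(2) < π(1) < π(k)} is the number of occurrences of the vincular pattern [21-3) in π (occurrences π(1)π(2)π(k) of the classical pattern 213 whose first two letters are the first two letters of π). -/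
open Equiv Finset

/-- The conjugacy class of permutations of `Fin n` with cycle type `lam`
(cycle type includes fixed points as parts of size 1, via `Equiv.Perm.partition`). -/
def conjClass (n : ℕ) (lam : n.Partition) : Finset (Equiv.Perm (Fin n)) :=
  Finset.univ.filter fun π => (Equiv.Perm.partition π).parts = lam.parts

/-!
The number of occurrences of `[21-3)` in `π` depends only on `(π(1), π(2))`: it is the number of
letters above `π(1)` if `π(1) > π(2)`, and `0` otherwise. Conjugation by permutations fixing `1`
and `2` preserves the class and makes `(π(1), π(2))` uniform on each orbit of pairs. Descents occur
in the orbit `{(2, 1)}`, in those of the pairs `(a, 1)` and of the pairs `(a, 2)` with `a > 2`, and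
in that of the pairs of distinct letters above `2`; the average numbers of occurrences there are
`n - 2`, `(n - 3) / 2`, `(n - 3) / 2` and `(n - 4) / 6`. By inclusion–exclusion the number of `π`
in each orbit is determined by how many `π` in the class fix, move or swap given points, and double
counting pairs of a permutation and a point, or an ordered pair of points, expresses these numbers
through `p` and `q`. In the code letters are numbered from `0`, and `n = m + 2`.
-/

/-- A finite subset of a group that is stable under conjugation, i.e. a finite union of conjugacy
classes; the averaging arguments below need nothing else about `conjClass`. -/
def IsConjClosed {G : Type*} [Group G] (S : Finset G) : Prop :=
  ∀ σ : G, ∀ π ∈ S, σ * π * σ⁻¹ ∈ S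

namespace IsConjClosed

section Group

variable {G X : Type*} [Group G] [MulAction G X] {S : Finset G}

theorem card_filter_conj (hS : IsConjClosed S) (σ : G) (P : G → Prop) [DecidablePred P] :
    #{π ∈ S | P (σ * π * σ⁻¹)} = #{π ∈ S | P π} := by
  refine card_bij' (fun π _ => σ * π * σ⁻¹) (fun π _ => σ⁻¹ * π * σ) ?_ ?_ ?_ ?_
  · exact fun π hπ => mem_filter.2 ⟨hS σ π (mem_filter.1 hπ).1, (mem_filter.1 hπ).2⟩
  · intro π hπ
    have hmem := hS σ⁻¹ π (mem_filter.1 hπ).1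
    rw [inv_inv] at hmem
    refine mem_filter.2 ⟨hmem, ?_⟩
    simpa [mul_assoc] using (mem_filter.1 hπ).2
  · intro π _; group
  · intro π _; group

theorem card_mul_card_filter (hS : IsConjClosed S) {P : G → X → Prop}
    [∀ π, DecidablePred (P π)] (hP : ∀ σ π a, P (σ * π * σ⁻¹) (σ • a) ↔ P π a)
    {T : Finset X} {x : X} (hT : ∀ a ∈ T, ∃ σ : G, σ • x = a) :
    #T * #{π ∈ S | P π x} = ∑ π ∈ S, #{a ∈ T | P π a} := by
  have card_eq : ∀ a ∈ T, #{π ∈ S | P π a} = #{π ∈ S | P π x} := by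
    intro a ha
    obtain ⟨σ, rfl⟩ := hT a ha
    simp only [← hS.card_filter_conj σ fun π => P π (σ • x), hP]
  calc #T * #{π ∈ S | P π x} = ∑ a ∈ T, #{π ∈ S | P π a} := by
        rw [sum_congr rfl card_eq, sum_const, smul_eq_mul]
    _ = ∑ π ∈ S, #{a ∈ T | P π a} :=
        (sum_card_bipartiteAbove_eq_sum_card_bipartiteBelow P).symm

/-- Conditioned on `φ π ∈ T`, the value `φ π` is uniformly distributed on `T`. -/
theorem sum_filter_comp_eq_mul_card [DecidableEq X] (hS : IsConjClosed S) {φ : G → X}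
    {T : Finset X}
    (hT : ∀ a ∈ T, ∀ b ∈ T, ∃ σ : G, σ • a = b ∧ ∀ π, φ (σ * π * σ⁻¹) = σ • φ π)
    {w : X → ℚ} {r : ℚ} (hr : ∑ a ∈ T, w a = r * #T) :
    ∑ π ∈ S with φ π ∈ T, w (φ π) = r * #{π ∈ S | φ π ∈ T} := by
  obtain ⟨c, card_fiber⟩ : ∃ c : ℕ, ∀ a ∈ T, #{π ∈ S | φ π = a} = c := by
    obtain rfl | ⟨b, hb⟩ := T.eq_empty_or_nonempty
    · simp
    refine ⟨#{π ∈ S | φ π = b}, fun a ha => ?_⟩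
    obtain ⟨σ, rfl, hσ⟩ := hT a ha b hb
    simp only [← hS.card_filter_conj σ fun π => φ π = σ • a, hσ, smul_left_cancel_iff]
  have sum_eq (v : X → ℚ) : ∑ π ∈ S with φ π ∈ T, v (φ π) = c * ∑ a ∈ T, v a := by
    rw [mul_sum, ← sum_fiberwise_of_maps_to (t := T) fun π hπ => (mem_filter.1 hπ).2]
    refine sum_congr rfl fun a ha => ?_
    have fiber_eq : {π ∈ {π ∈ S | φ π ∈ T} | φ π = a} = {π ∈ S | φ π = a} := by grind
    rw [fiber_eq, ← card_fiber a ha, ← nsmul_eq_mul, ← sum_const]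
    exact sum_congr rfl fun π hπ => by rw [(mem_filter.1 hπ).2]
  have card_eq : (#{π ∈ S | φ π ∈ T} : ℚ) = c * #T := by simpa using sum_eq fun _ => 1
  rw [sum_eq, hr, card_eq]
  ring

end Group

end IsConjClosed

section CycleCounts

variable {α : Type*} [Fintype α] [DecidableEq α] (π : Perm α)

theorem card_filter_card_support_cycleOf_eq (k : ℕ) :
    #{x ∈ π.support | #(π.cycleOf x).support = k} = k * π.cycleType.count k := by
  have maps_to : ∀ x ∈ ({x ∈ π.support | #(π.cycleOf x).support = k} : Finset α),
      π.cycleOf x ∈ ({c ∈ π.cycleFactorsFinset | #c.support = k} : Finset (Perm α)) := by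
    simp [Perm.cycleOf_mem_cycleFactorsFinset_iff]
  have card_fiber : ∀ c ∈ ({c ∈ π.cycleFactorsFinset | #c.support = k} : Finset (Perm α)),
      #{x ∈ {x ∈ π.support | #(π.cycleOf x).support = k} | π.cycleOf x = c} = k := by
    intro c hc
    obtain ⟨hcπ, rfl⟩ := mem_filter.1 hc
    congr 1
    ext x
    have mem_iff := π.eq_cycleOf_of_mem_cycleFactorsFinset_iff c hcπ x
    have le_support := Perm.mem_cycleFactorsFinset_support_le hcπ
    grind
  have count_eq : π.cycleType.count k = #{c ∈ π.cycleFactorsFinset | #c.support = k} := by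
    rw [Perm.cycleType_def, Multiset.count_map]
    simp only [eq_comm (a := k), Function.comp_apply]
    rfl
  rw [card_eq_sum_card_fiberwise maps_to, sum_congr rfl card_fiber, sum_const, smul_eq_mul,
    count_eq, mul_comm]

theorem card_support_cycleOf_eq_two_iff {x : α} :
    #(π.cycleOf x).support = 2 ↔ π x ≠ x ∧ π (π x) = x := by
  by_cases hx : π x = x
  · simp [(Perm.cycleOf_eq_one_iff π).2 hx, hx]
  have hcycle := π.isCycle_cycleOf hx
  have cycleOf_ne : π.cycleOf x x ≠ x := by simpa using hx
  have sq_eq_one_iff : π.cycleOf x ^ 2 = 1 ↔ π (π x) = x := by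
    rw [hcycle.pow_eq_one_iff' cycleOf_ne, Perm.cycleOf_pow_apply_self, sq, Perm.mul_apply]
  rw [← hcycle.orderOf, orderOf_eq_prime_iff, sq_eq_one_iff, and_comm]
  simp [Perm.cycleOf_eq_one_iff]

theorem count_one_parts_partition : π.partition.parts.count 1 = #{x | π x = x} := by
  have count_cycleType : π.cycleType.count 1 = 0 :=
    Multiset.count_eq_zero.2 fun h => (Perm.one_lt_of_mem_cycleType h).false
  rw [Perm.parts_partition, Multiset.count_add, count_cycleType, Multiset.count_replicate_self,
    zero_add, ← card_compl]
  congr 1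
  ext x
  simp

theorem two_mul_count_two_parts_partition :
    2 * π.partition.parts.count 2 = #{x | π x ≠ x ∧ π (π x) = x} := by
  have count_replicate :
      (Multiset.replicate (Fintype.card α - #π.support) 1).count 2 = 0 := by
    simp [Multiset.count_replicate]
  rw [Perm.parts_partition, Multiset.count_add, count_replicate, add_zero,
    ← card_filter_card_support_cycleOf_eq]
  congr 1
  ext x
  simp only [card_support_cycleOf_eq_two_iff, mem_filter, Perm.mem_support, mem_univ, true_and]
  tauto

theorem card_offDiag_filter_apply_eq :
    #{a ∈ (univ : Finset α).offDiag | π a.1 = a.2} + π.partition.parts.count 1 =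
      Fintype.card α := by
  have card_eq : #{a ∈ (univ : Finset α).offDiag | π a.1 = a.2} = #{x | ¬π x = x} :=
    card_bij' (fun a _ => a.1) (fun x _ => (x, π x)) (by grind) (by grind) (by grind) (by grind)
  rw [card_eq, count_one_parts_partition, add_comm, card_filter_add_card_filter_not, card_univ]

theorem card_offDiag_filter_fixed :
    #{a ∈ (univ : Finset α).offDiag | π a.1 = a.1 ∧ π a.2 = a.2} =
      #({x | π x = x} : Finset α).offDiag := by
  congr 1
  grind

theorem card_offDiag_filter_swapped :
    #{a ∈ (univ : Finset α).offDiag | π a.1 = a.2 ∧ π a.2 = a.1} =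
      2 * π.partition.parts.count 2 := by
  rw [two_mul_count_two_parts_partition]
  exact card_bij' (fun a _ => a.1) (fun x _ => (x, π x)) (by grind) (by grind) (by grind)
    (by grind)

end CycleCounts

theorem cast_card_offDiag {α : Type*} (s : Finset α) :
    (#s.offDiag : ℚ) = #s * (#s - 1) := by
  classical
  rw [offDiag_card, Nat.cast_sub (Nat.le_mul_self _)]
  push_cast
  ring

theorem exists_perm_map_pair_eq_of_mem {α : Type*} {R : Set α} {a b a' b' : α}
    (ha : a ∈ R) (hb : b ∈ R) (ha' : a' ∈ R) (hb' : b' ∈ R) (hab : a ≠ b) (hab' : a' ≠ b') :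
    ∃ σ : Perm α, σ a = a' ∧ σ b = b' ∧ ∀ z ∉ R, σ z = z := by
  classical
  obtain ⟨τ, hτa, hτb⟩ := MulAction.is_two_pretransitive_iff.1
    (Perm.isMultiplyPretransitive R 2)
    (Subtype.coe_ne_coe.1 hab : (⟨a, ha⟩ : R) ≠ ⟨b, hb⟩)
    (Subtype.coe_ne_coe.1 hab' : (⟨a', ha'⟩ : R) ≠ ⟨b', hb'⟩)
  refine ⟨Perm.ofSubtype τ, ?_, ?_, fun z hz => Perm.ofSubtype_apply_of_not_mem τ hz⟩
  · rw [Perm.ofSubtype_apply_of_mem τ ha]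
    exact congrArg Subtype.val hτa
  · rw [Perm.ofSubtype_apply_of_mem τ hb]
    exact congrArg Subtype.val hτb

namespace IsConjClosed

section PointCounts

variable {α : Type*} [Fintype α] {S : Finset (Perm α)} {x y : α}

theorem card_mul_card_filter_pair (hS : IsConjClosed S) {P : Perm α → α × α → Prop}
    [∀ π, DecidablePred (P π)] (hP : ∀ σ π a, P (σ * π * σ⁻¹) (σ • a) ↔ P π a) (hxy : x ≠ y) :
    (Fintype.card α : ℚ) * (Fintype.card α - 1) * #{π ∈ S | P π (x, y)} =
      ∑ π ∈ S, (#{a ∈ univ.offDiag | P π a} : ℚ) := by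
  have transitive : ∀ a ∈ (univ : Finset α).offDiag, ∃ σ : Perm α, σ • (x, y) = a := by
    intro a ha
    obtain ⟨σ, hx, hy⟩ := MulAction.is_two_pretransitive_iff.1
      (Perm.isMultiplyPretransitive α 2) hxy (mem_offDiag.1 ha).2.2
    exact ⟨σ, Prod.ext hx hy⟩
  rw [← card_univ, ← cast_card_offDiag]
  exact_mod_cast hS.card_mul_card_filter hP transitive

variable [DecidableEq α]

theorem card_mul_card_filter_apply_eq_self (hS : IsConjClosed S) (x : α) :
    (Fintype.card α : ℚ) * #{π ∈ S | π x = x} =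
      ∑ π ∈ S, (π.partition.parts.count 1 : ℚ) := by
  have double_count := hS.card_mul_card_filter (P := fun π x => π x = x) (by simp)
    (T := univ) fun a _ => MulAction.exists_smul_eq (Perm α) x a
  simp only [← count_one_parts_partition, card_univ] at double_count
  exact_mod_cast double_count

theorem card_mul_card_filter_apply_eq (hS : IsConjClosed S) (hxy : x ≠ y) :
    (Fintype.card α : ℚ) * (Fintype.card α - 1) * #{π ∈ S | π x = y} =
      ∑ π ∈ S, (Fintype.card α - π.partition.parts.count 1 : ℚ) := by
  rw [hS.card_mul_card_filter_pair (P := fun π a => π a.1 = a.2) (by simp) hxy]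
  refine sum_congr rfl fun π _ => ?_
  rw [eq_sub_iff_add_eq]
  exact_mod_cast card_offDiag_filter_apply_eq π

theorem card_mul_card_filter_fixed_pair (hS : IsConjClosed S) (hxy : x ≠ y) :
    (Fintype.card α : ℚ) * (Fintype.card α - 1) * #{π ∈ S | π x = x ∧ π y = y} =
      ∑ π ∈ S, (π.partition.parts.count 1 * (π.partition.parts.count 1 - 1) : ℚ) := by
  rw [hS.card_mul_card_filter_pair (P := fun π a => π a.1 = a.1 ∧ π a.2 = a.2) (by simp) hxy]
  simp only [card_offDiag_filter_fixed, cast_card_offDiag, count_one_parts_partition]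

theorem card_mul_card_filter_swapped_pair (hS : IsConjClosed S) (hxy : x ≠ y) :
    (Fintype.card α : ℚ) * (Fintype.card α - 1) * #{π ∈ S | π x = y ∧ π y = x} =
      ∑ π ∈ S, (2 * π.partition.parts.count 2 : ℚ) := by
  rw [hS.card_mul_card_filter_pair (P := fun π a => π a.1 = a.2 ∧ π a.2 = a.1) (by simp) hxy]
  simp only [card_offDiag_filter_swapped, Nat.cast_mul, Nat.cast_ofNat]

end PointCounts

section PairSums

variable {α : Type*} [DecidableEq α] {S : Finset (Perm α)} {x y : α} {R : Finset α}
  {w : α × α → ℚ} {r : ℚ}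

theorem sum_filter_pair_mem_eq_mul_card (hS : IsConjClosed S) {T : Finset (α × α)}
    (hT : ∀ a ∈ T, ∀ b ∈ T, ∃ σ : Perm α, σ • a = b ∧ σ x = x ∧ σ y = y)
    (hr : ∑ a ∈ T, w a = r * #T) :
    ∑ π ∈ S with (π x, π y) ∈ T, w (π x, π y) = r * #{π ∈ S | (π x, π y) ∈ T} := by
  refine hS.sum_filter_comp_eq_mul_card (φ := fun π => (π x, π y)) (fun a ha b hb => ?_) hr
  obtain ⟨σ, hσ, hx, hy⟩ := hT a ha b hb
  refine ⟨σ, hσ, fun π => ?_⟩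
  simp [σ.symm_apply_eq.2 hx.symm, σ.symm_apply_eq.2 hy.symm]

theorem sum_filter_mem_product_singleton_eq_mul_card (hS : IsConjClosed S) {z : α}
    (hx : x ∉ R) (hy : y ∉ R) (hz : z ∉ R) (hr : ∑ a ∈ R ×ˢ {z}, w a = r * #(R ×ˢ {z})) :
    ∑ π ∈ S with (π x, π y) ∈ R ×ˢ {z}, w (π x, π y) =
      r * #{π ∈ S | (π x, π y) ∈ R ×ˢ {z}} := by
  refine hS.sum_filter_pair_mem_eq_mul_card ?_ hr
  rintro ⟨a, b⟩ ha ⟨a', b'⟩ ha'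
  refine ⟨swap a a', ?_⟩
  simp only [Prod.smul_mk, Perm.smul_def, Prod.mk.injEq]
  grind

theorem sum_filter_mem_offDiag_eq_mul_card (hS : IsConjClosed S) (hx : x ∉ R) (hy : y ∉ R)
    (hr : ∑ a ∈ R.offDiag, w a = r * #R.offDiag) :
    ∑ π ∈ S with (π x, π y) ∈ R.offDiag, w (π x, π y) =
      r * #{π ∈ S | (π x, π y) ∈ R.offDiag} := by
  refine hS.sum_filter_pair_mem_eq_mul_card (fun a ha b hb => ?_) hr
  obtain ⟨ha₁, ha₂, ha_ne⟩ := mem_offDiag.1 ha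
  obtain ⟨hb₁, hb₂, hb_ne⟩ := mem_offDiag.1 hb
  obtain ⟨σ, hσ₁, hσ₂, hσ⟩ := exists_perm_map_pair_eq_of_mem (R := R) ha₁ ha₂ hb₁ hb₂ ha_ne hb_ne
  exact ⟨σ, Prod.ext hσ₁ hσ₂, hσ x hx, hσ y hy⟩

end PairSums

end IsConjClosed

section InclusionExclusion

variable {α : Type*} [Fintype α] [DecidableEq α] {x y : α}

theorem card_filter_mem_compl_product_left (S : Finset (Perm α)) (hxy : x ≠ y) :
    (#{π ∈ S | (π x, π y) ∈ ({x, y}ᶜ : Finset α) ×ˢ {x}} : ℚ) =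
      #{π ∈ S | π y = x} - #{π ∈ S | π x = y ∧ π y = x} := by
  simp only [← sum_boole, ← sum_sub_distrib]
  refine sum_congr rfl fun π _ => ?_
  have := π.injective.ne hxy
  grind [mem_compl]

theorem card_filter_mem_compl_product_right (S : Finset (Perm α)) (hxy : x ≠ y) :
    (#{π ∈ S | (π x, π y) ∈ ({x, y}ᶜ : Finset α) ×ˢ {y}} : ℚ) =
      #{π ∈ S | π y = y} - #{π ∈ S | π x = x ∧ π y = y} := by
  simp only [← sum_boole, ← sum_sub_distrib]
  refine sum_congr rfl fun π _ => ?_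
  have := π.injective.ne hxy
  grind [mem_compl]

theorem card_filter_mem_compl_offDiag (S : Finset (Perm α)) (hxy : x ≠ y) :
    (#{π ∈ S | (π x, π y) ∈ ({x, y}ᶜ : Finset α).offDiag} : ℚ) =
      #S - #{π ∈ S | π x = x} - #{π ∈ S | π x = y} - #{π ∈ S | π y = x} - #{π ∈ S | π y = y}
        + #{π ∈ S | π x = x ∧ π y = y} + #{π ∈ S | π x = y ∧ π y = x} := by
  simp only [card_eq_sum_ones S, Nat.cast_sum, Nat.cast_one, ← sum_boole, ← sum_sub_distrib,
    ← sum_add_distrib]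
  refine sum_congr rfl fun π _ => ?_
  have := π.injective.ne hxy
  grind [mem_compl]

end InclusionExclusion

section Pattern

/-- For the first two letters `a`, `b` of a permutation of `Fin n`, the number of later letters
`c` with `b < a < c`, i.e. completing them to an occurrence of `[21-3)`. It takes a pair and is
rational-valued to serve as a weight `w` in the lemmas above. -/
def completions {n : ℕ} (a : Fin n × Fin n) : ℚ :=
  if a.2 < a.1 then #(Ioi a.1) else 0

variable {m : ℕ}

theorem card_filter_pattern_eq_completions (π : Perm (Fin (m + 2))) :
    (#{k : Fin (m + 2) | 1 < (k : ℕ) ∧ π 1 < π 0 ∧ π 0 < π k} : ℚ) =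
      completions (π 0, π 1) := by
  rw [completions]
  split_ifs with hdesc
  · have filter_eq : ({k | 1 < (k : ℕ) ∧ π 1 < π 0 ∧ π 0 < π k} : Finset (Fin (m + 2))) =
        (Ioi (π 0)).map π.symm.toEmbedding := by
      ext k
      have one_lt : π 0 < π k → 1 < (k : ℕ) := by
        intro hk
        have ne_zero : k ≠ 0 := by rintro rfl; exact hk.false
        have ne_one : k ≠ 1 := by rintro rfl; exact hk.asymm hdesc
        simp only [ne_eq, Fin.ext_iff, Fin.val_zero, Fin.val_one] at ne_zero ne_one
        omega
      simpa [hdesc] using one_lt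
    rw [filter_eq, card_map]
  · simp [hdesc]

theorem completions_eq_sum_ite (a : Fin (m + 2) × Fin (m + 2)) :
    completions a =
      (if a ∈ ({(1, 0)} : Finset _) then completions a else 0)
        + (if a ∈ ({0, 1}ᶜ : Finset (Fin (m + 2))) ×ˢ {0} then completions a else 0)
        + (if a ∈ ({0, 1}ᶜ : Finset (Fin (m + 2))) ×ˢ {1} then completions a else 0)
        + (if a ∈ ({0, 1}ᶜ : Finset (Fin (m + 2))).offDiag then completions a else 0) := by
  obtain ⟨a, b⟩ := a
  by_cases hba : b < a
  · have zero_ne_one : (0 : Fin (m + 2)) ≠ 1 := by simp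
    have a_ne_zero : a ≠ 0 := Fin.ne_zero_of_lt hba
    have b_eq_zero : a = 1 → b = 0 := by rintro rfl; exact (Fin.lt_one_iff b).1 hba
    grind [mem_compl]
  · simp [completions, hba]

theorem sum_compl_zero_one (f : ℕ → ℚ) :
    ∑ c ∈ ({0, 1}ᶜ : Finset (Fin (m + 2))), f c = ∑ i ∈ range m, f (i + 2) := by
  have sum_univ : ∑ c : Fin (m + 2), f c = ∑ i ∈ range (m + 2), f i :=
    Fin.sum_univ_eq_sum_range f (m + 2)
  rw [← sum_add_sum_compl {0, 1}, sum_pair (by simp), sum_range_succ', sum_range_succ'] at sum_univ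
  simp only [Fin.val_zero, Fin.val_one, zero_add, add_assoc, Nat.reduceAdd] at sum_univ
  linarith

theorem cast_card_Ioi (c : Fin (m + 2)) : (#(Ioi c) : ℚ) = m + 1 - (c : ℕ) := by
  rw [Fin.card_Ioi, Nat.cast_sub (by omega)]
  push_cast
  ring

theorem card_compl_zero_one : #({0, 1}ᶜ : Finset (Fin (m + 2))) = m := by
  simp [card_compl]

theorem sum_completions_product_singleton {z : Fin (m + 2)} (hz : z ≤ 1) :
    ∑ a ∈ ({0, 1}ᶜ : Finset (Fin (m + 2))) ×ˢ {z}, completions a =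
      (m - 1) / 2 * #(({0, 1}ᶜ : Finset (Fin (m + 2))) ×ˢ {z}) := by
  have completions_eq : ∀ c ∈ ({0, 1}ᶜ : Finset (Fin (m + 2))),
      completions (c, z) = m + 1 - (c : ℕ) := by
    intro c hc
    have hzc : z < c := by
      simp only [mem_compl, mem_insert, mem_singleton, Fin.ext_iff, Fin.val_zero, Fin.val_one] at hc
      simp only [Fin.le_def, Fin.lt_def, Fin.val_one] at hz ⊢
      omega
    rw [completions, if_pos hzc, cast_card_Ioi]
  have gauss (k : ℕ) :
      ∑ i ∈ range k, ((m : ℚ) + 1 - (i + 2 : ℕ)) = k * (m - 1) - k * (k - 1) / 2 := by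
    induction k with
    | zero => simp
    | succ k ih => rw [sum_range_succ, ih]; push_cast; ring
  rw [sum_product, card_product, card_singleton, mul_one, card_compl_zero_one]
  simp only [sum_singleton]
  rw [sum_congr rfl completions_eq, sum_compl_zero_one fun c => (m : ℚ) + 1 - c, gauss]
  ring

theorem sum_completions_compl_zero_one {c : Fin (m + 2)} (hc : c ∈ ({0, 1}ᶜ : Finset _)) :
    ∑ b ∈ ({0, 1}ᶜ : Finset (Fin (m + 2))), completions (c, b) =
      ((c : ℕ) - 2) * (m + 1 - (c : ℕ)) := by
  have hc_two : 2 ≤ (c : ℕ) := by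
    simp only [mem_compl, mem_insert, mem_singleton, Fin.ext_iff, Fin.val_zero, Fin.val_one] at hc
    omega
  have filter_eq : {b ∈ ({0, 1}ᶜ : Finset (Fin (m + 2))) | b < c} = Ioo 1 c := by
    ext b
    simp only [mem_filter, mem_compl, mem_insert, mem_singleton, mem_Ioo, Fin.ext_iff,
      Fin.lt_def, Fin.val_zero, Fin.val_one]
    omega
  simp only [completions]
  rw [← sum_filter, filter_eq, sum_const, nsmul_eq_mul, cast_card_Ioi, Fin.card_Ioo, Fin.val_one,
    Nat.sub_sub, Nat.cast_sub hc_two, Nat.cast_ofNat]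

theorem sum_completions_offDiag :
    ∑ a ∈ ({0, 1}ᶜ : Finset (Fin (m + 2))).offDiag, completions a =
      (m - 2) / 6 * #({0, 1}ᶜ : Finset (Fin (m + 2))).offDiag := by
  have sum_eq_sum_product : ∑ a ∈ ({0, 1}ᶜ : Finset (Fin (m + 2))).offDiag, completions a =
      ∑ a ∈ ({0, 1}ᶜ : Finset (Fin (m + 2))) ×ˢ {0, 1}ᶜ, completions a := by
    refine sum_subset (by grind) fun a _ ha => if_neg ?_
    grind
  have sum_range_mul (k : ℕ) :
      ∑ i ∈ range k, (((i + 2 : ℕ) : ℚ) - 2) * (m + 1 - (i + 2 : ℕ)) =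
        k * (k - 1) / 2 * (m - 1) - (k - 1) * k * (2 * k - 1) / 6 := by
    induction k with
    | zero => simp
    | succ k ih => rw [sum_range_succ, ih]; push_cast; ring
  rw [sum_eq_sum_product, sum_product, sum_congr rfl fun c => sum_completions_compl_zero_one,
    sum_compl_zero_one fun c => ((c : ℚ) - 2) * (m + 1 - c), sum_range_mul, cast_card_offDiag,
    card_compl_zero_one]
  ring

theorem IsConjClosed.sum_completions {S : Finset (Perm (Fin (m + 2)))} (hS : IsConjClosed S) :
    ∑ π ∈ S, completions (π 0, π 1) =
      m * #{π ∈ S | π 0 = 1 ∧ π 1 = 0}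
        + (m - 1) / 2 * #{π ∈ S | (π 0, π 1) ∈ ({0, 1}ᶜ : Finset _) ×ˢ {0}}
        + (m - 1) / 2 * #{π ∈ S | (π 0, π 1) ∈ ({0, 1}ᶜ : Finset _) ×ˢ {1}}
        + (m - 2) / 6 * #{π ∈ S | (π 0, π 1) ∈ ({0, 1}ᶜ : Finset _).offDiag} := by
  have sum_swapped : ∑ π ∈ S with (π 0, π 1) ∈ ({(1, 0)} : Finset _), completions (π 0, π 1) =
      m * #{π ∈ S | π 0 = 1 ∧ π 1 = 0} := by
    simp only [mem_singleton, Prod.mk.injEq]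
    rw [mul_comm, ← nsmul_eq_mul, ← sum_const]
    refine sum_congr rfl fun π hπ => ?_
    simp [completions, (mem_filter.1 hπ).2]
  rw [sum_congr rfl fun π _ => completions_eq_sum_ite (π 0, π 1)]
  simp only [sum_add_distrib, ← sum_filter]
  rw [sum_swapped,
    hS.sum_filter_mem_product_singleton_eq_mul_card (by simp) (by simp) (by simp)
      (sum_completions_product_singleton (Fin.zero_le 1)),
    hS.sum_filter_mem_product_singleton_eq_mul_card (by simp) (by simp) (by simp)
      (sum_completions_product_singleton le_rfl),
    hS.sum_filter_mem_offDiag_eq_mul_card (by simp) (by simp) sum_completions_offDiag]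

end Pattern

theorem isConjClosed_conjClass (n : ℕ) (lam : n.Partition) : IsConjClosed (conjClass n lam) := by
  intro σ π hπ
  refine mem_filter.2 ⟨mem_univ _, ?_⟩
  rw [← (mem_filter.1 hπ).2, Perm.parts_partition, Perm.parts_partition, Perm.cycleType_conj,
    Perm.card_support_conj]

theorem sum_conjClass_parts_partition {n : ℕ} (lam : n.Partition) (f : Multiset ℕ → ℚ) :
    ∑ π ∈ conjClass n lam, f π.partition.parts = #(conjClass n lam) * f lam.parts := by
  rw [← nsmul_eq_mul, ← sum_const]
  exact sum_congr rfl fun π hπ => congrArg f (mem_filter.1 hπ).2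

theorem card_mul_sum_conjClass_completions {m : ℕ} (lam : (m + 2).Partition) {p q : ℚ}
    (hp : p = lam.parts.count 1) (hq : q = lam.parts.count 2) :
    ((m : ℚ) + 2) * (m + 2 - 1) * ∑ π ∈ conjClass (m + 2) lam, completions (π 0, π 1) =
      #(conjClass (m + 2) lam) * (m * (2 * q)
        + (m - 1) / 2 * (m + 2 - p - 2 * q)
        + (m - 1) / 2 * ((m + 2 - 1) * p - p * (p - 1))
        + (m - 2) / 6 * ((m + 2) * (m + 2 - 1) - 2 * (m + 2 - 1) * p - 2 * (m + 2 - p)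
          + p * (p - 1) + 2 * q)) := by
  have hS := isConjClosed_conjClass (m + 2) lam
  have zero_ne_one : (0 : Fin (m + 2)) ≠ 1 := by simp
  have fixed (x : Fin (m + 2)) := hS.card_mul_card_filter_apply_eq_self x
  have moved {x y : Fin (m + 2)} (hxy : x ≠ y) := hS.card_mul_card_filter_apply_eq hxy
  have fixed_pair := hS.card_mul_card_filter_fixed_pair zero_ne_one
  have swapped_pair := hS.card_mul_card_filter_swapped_pair zero_ne_one
  simp only [sum_conjClass_parts_partition lam fun s => (s.count 1 : ℚ),
    sum_conjClass_parts_partition lam fun s => ((m : ℚ) + 2 - s.count 1),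
    sum_conjClass_parts_partition lam fun s => (s.count 1 * (s.count 1 - 1) : ℚ),
    sum_conjClass_parts_partition lam fun s => (2 * s.count 2 : ℚ), ← hp, ← hq,
    Fintype.card_fin, Nat.cast_add, Nat.cast_ofNat] at fixed moved fixed_pair swapped_pair
  rw [hS.sum_completions, card_filter_mem_compl_product_left _ zero_ne_one,
    card_filter_mem_compl_product_right _ zero_ne_one,
    card_filter_mem_compl_offDiag _ zero_ne_one]
  linear_combination m * swapped_pair
    + (m - 1) / 2 * (moved zero_ne_one.symm - swapped_pair)
    + (m - 1) / 2 * ((m + 2 - 1) * fixed 1 - fixed_pair)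
    + (m - 2) / 6 * (fixed_pair + swapped_pair - (m + 2 - 1) * (fixed 0 + fixed 1)
      - moved zero_ne_one - moved zero_ne_one.symm)

theorem stmt17 (n : ℕ) (hn : 3 ≤ n) (lam : n.Partition)
    (p q r X₁ X₂ X₃ X₄ : ℚ)
    (hp : p = (lam.parts.count 1 : ℚ)) (hq : q = (lam.parts.count 2 : ℚ))
    (hr : r = (lam.parts.count 3 : ℚ))
    (hX1 : X₁ = p - 1) (hX2 : X₂ = (p - 1) * (p - 2) / 2 + q - 1)
    (hX3 : X₃ = (p - 1) * (p - 2) / 2 - q)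
    (hX4 : X₄ = (p - 1) * (p - 2) * (p - 3) / 3 - p - r + 2) :
    (∑ π ∈ conjClass n lam,
      ((((Finset.univ : Finset (Fin n)).filter fun k : Fin n =>
          1 < (k : ℕ) ∧ π ⟨1, by omega⟩ < π ⟨0, by omega⟩ ∧
          π ⟨0, by omega⟩ < π k).card : ℚ)))
    = ((conjClass n lam).card : ℚ) *
      (((n : ℚ) - 2) / 6
        + ((n : ℚ) - 3) * ((n : ℚ) - 4) * X₁ / (6 * (n : ℚ) * ((n : ℚ) - 1))
        + X₂ / (3 * (n : ℚ))
        - ((n : ℚ) - 2) * X₃ / ((n : ℚ) * ((n : ℚ) - 1))) := by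
  obtain ⟨m, rfl⟩ : ∃ m, n = m + 2 := ⟨n - 2, by omega⟩
  refine (sum_congr rfl fun π _ => card_filter_pattern_eq_completions π).trans ?_
  have card_ne_zero : (m : ℚ) + 2 ≠ 0 := by positivity
  have card_sub_one_ne_zero : (m : ℚ) + 2 - 1 ≠ 0 := by
    rw [add_sub_assoc]
    positivity
  apply mul_left_cancel₀ (mul_ne_zero card_ne_zero card_sub_one_ne_zero)
  rw [card_mul_sum_conjClass_completions lam hp hq, hX1, hX2, hX3]
  push_cast
  field_simp
  ring
end

section
/- Let n ≥ 3, let T ⊆ S_n be the set of all transpositions (so |T| = n(n−1)/2), and let t ≥ 0 be an integer. Then (2/(n(n−1)))^t · Σ over all (γ₁,…,γ_t) ∈ T^t of occ₍₁₋₂₋₃₎(γ₁γ₂⋯γ_t) equals C(n,3)/6 + ((n+1)(n−1)(3n−4)/60)·(1 − 2/(n−1))^t + ((n+1)n(n−3)/60)·(1 − 4/n)^t + ((3n−2)(n−1)(n−2)/60)·(1 − 4/(n−1))^t + (n(n−2)(n−4)/45)·(1 − 6/n)^t, where for t = 0 the empty product γ₁⋯γ_t is the identity permutation. In other words, this expression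 is the expected number of occurrences of the classical pattern 123 in a product of t independent uniformly random transpositions. -/
open Equiv Finset

/-!
Write the total number of occurrences as a sum over positions `i < j < k`, and let the product of
transpositions act on the triple `(i, j, k)`: the total is `Φ (L ^ t f)`, where `L` is the walk
operator of the transpositions on functions of ordered triples of distinct points, `f` is the
indicator of increasing triples and `Φ` sums a function over increasing triples.

With `s` the sign of a consecutive difference, `f = (1 + s₀₁) (1 + s₁₂) / 4`. The operator `L`
preserves a space containing `f` and spanned by seven functions: `1`, rank differences, second
differences of squared ranks, sums and products of signs, rank distances and signed rank sums. It
acts there triangularly with eigenvalues `n (n - 1) / 2`, `n (n - 3) / 2`, `(n - 1) (n - 4) / 2`,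
`n (n - 5) / 2` and `(n - 1) (n - 6) / 2`. The last two differ by `n - 3`, so the component of the
sign product for the last eigenvalue stays coupled to an eigenvector for the one before it, and the
iterates carry a geometric sum in these two eigenvalues.
-/

section EigenvectorIteration

variable {R M : Type*} [CommRing R] [AddCommGroup M] [Module R M]

lemma pow_apply_of_apply_eq_smul_add {L : Module.End R M} {lam mu : R} {p q : M}
    (hp : L p = mu • p + q) (hq : L q = lam • q) (t : ℕ) :
    (L ^ t) p = mu ^ t • p + (∑ i ∈ range t, mu ^ i * lam ^ (t - 1 - i)) • q := by
  induction t with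
  | zero => simp
  | succ t ih =>
    rw [pow_succ', Module.End.mul_apply, ih, map_add, map_smul, map_smul, hp, hq,
      Nat.add_sub_cancel, geom_sum₂_succ_eq]
    module

lemma pow_apply_of_apply_eq_smul {L : Module.End R M} {mu : R} {p : M}
    (hp : L p = mu • p) (t : ℕ) : (L ^ t) p = mu ^ t • p := by
  simpa using pow_apply_of_apply_eq_smul_add (lam := 0) (q := 0) (hp.trans (add_zero _).symm)
    (by simp) t

end EigenvectorIteration

section WalkOperator

variable {R G X : Type*} [CommSemiring R] [Monoid G] [MulAction G X]

/-- The unnormalised transition operator `f ↦ (x ↦ ∑ g ∈ T, f (g • x))` of the walk on `X` whose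
steps are drawn from `T`, acting on functions on the state space `X`. -/
def walkOperator (R X : Type*) {G : Type*} [CommSemiring R] [Monoid G] [MulAction G X]
    (T : Finset G) : Module.End R (X → R) :=
  ∑ g ∈ T, LinearMap.funLeft R R (g • ·)

lemma walkOperator_apply (T : Finset G) (f : X → R) (x : X) :
    walkOperator R X T f x = ∑ g ∈ T, f (g • x) := by
  simp [walkOperator, LinearMap.funLeft_apply]

lemma sum_piFinset_succ {A N : Type*} [AddCommMonoid N] (T : Finset A) (t : ℕ)
    (F : (Fin (t + 1) → A) → N) :
    ∑ γ ∈ Fintype.piFinset (fun _ : Fin (t + 1) => T), F γ =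
      ∑ a ∈ T, ∑ γ ∈ Fintype.piFinset (fun _ : Fin t => T), F (Fin.cons a γ) := by
  rw [← sum_product']
  refine (sum_equiv (Fin.consEquiv fun _ => A) (fun p => ?_) fun p _ => rfl).symm
  simp [Fin.forall_fin_succ, Fin.consEquiv]

lemma walkOperator_pow_apply (T : Finset G) (t : ℕ) (f : X → R) (x : X) :
    (walkOperator R X T ^ t) f x =
      ∑ γ ∈ Fintype.piFinset (fun _ : Fin t => T), f ((List.ofFn γ).prod • x) := by
  induction t generalizing f with
  | zero => simp
  | succ t ih =>
    rw [pow_succ, Module.End.mul_apply, ih, sum_piFinset_succ, sum_comm]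
    simp only [walkOperator_apply, List.ofFn_succ, Fin.cons_zero, Fin.cons_succ, List.prod_cons,
      mul_smul]

end WalkOperator

section Transpositions

variable {α R : Type*}

lemma swap_eq_swap_iff_of_ne [DecidableEq α] {a b x y : α} (hab : a ≠ b) :
    x ≠ y ∧ swap x y = swap a b ↔ (x = a ∧ y = b) ∨ (x = b ∧ y = a) := by
  constructor
  · rintro ⟨hxy, h⟩
    have hx := congr($h x)
    rw [swap_apply_left, swap_apply_def] at hx
    split_ifs at hx <;> simp_all
  · rintro (⟨rfl, rfl⟩ | ⟨rfl, rfl⟩)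
    exacts [⟨hab, rfl⟩, ⟨hab.symm, swap_comm _ _⟩]

lemma sum_eq_sum_add_of_agree_off_triple [Fintype α] [CommRing R] {a b c : α}
    {f g : α → R} (hab : a ≠ b) (hac : a ≠ c) (hbc : b ≠ c)
    (hfg : ∀ x, x ≠ a → x ≠ b → x ≠ c → f x = g x) :
    ∑ x, f x = ∑ x, g x + (f a - g a) + (f b - g b) + (f c - g c) := by
  classical
  have htriple : ∀ k : α → R, ∑ x ∈ {a, b, c}, k x = k a + k b + k c := fun k => by
    rw [sum_insert (by simp [hab, hac]), sum_pair hbc, add_assoc]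
  have hcompl : ∑ x ∈ {a, b, c}ᶜ, f x = ∑ x ∈ {a, b, c}ᶜ, g x :=
    sum_congr rfl fun x hx => by
      simp only [mem_compl, mem_insert, mem_singleton, not_or] at hx
      exact hfg x hx.1 hx.2.1 hx.2.2
  rw [← sum_add_sum_compl {a, b, c} f, ← sum_add_sum_compl {a, b, c} g, htriple, htriple, hcompl]
  ring

variable [Fintype α] [DecidableEq α]

/-- The set of all transpositions of `α`. -/
def transpositions (α : Type*) [Fintype α] [DecidableEq α] : Finset (Perm α) :=
  univ.filter fun π => ∃ a b : α, a ≠ b ∧ π = swap a b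

lemma card_offDiag_filter_swap_eq {π : Perm α} (hπ : π ∈ transpositions α) :
    #{p ∈ (univ : Finset α).offDiag | swap p.1 p.2 = π} = 2 := by
  obtain ⟨a, b, hab, rfl⟩ := (mem_filter.mp hπ).2
  have hfiber : {p ∈ (univ : Finset α).offDiag | swap p.1 p.2 = swap a b} = {(a, b), (b, a)} := by
    ext ⟨x, y⟩
    simpa using swap_eq_swap_iff_of_ne hab
  rw [hfiber, card_pair (by simp [hab])]

lemma sum_sum_swap [CommRing R] (F : Perm α → R) :
    ∑ x, ∑ y, F (swap x y) = 2 * ∑ π ∈ transpositions α, F π + Fintype.card α * F 1 := by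
  have hoffDiag : ∑ p ∈ (univ : Finset α).offDiag, F (swap p.1 p.2)
      = 2 * ∑ π ∈ transpositions α, F π := by
    have hmaps : ∀ p ∈ (univ : Finset α).offDiag, swap p.1 p.2 ∈ transpositions α := fun p hp =>
      mem_filter.mpr ⟨mem_univ _, p.1, p.2, (mem_offDiag.mp hp).2.2, rfl⟩
    rw [← sum_fiberwise_of_maps_to' hmaps, mul_sum]
    refine sum_congr rfl fun π hπ => ?_
    rw [sum_const, card_offDiag_filter_swap_eq hπ, two_nsmul, two_mul]
  have hdiag : ∑ p ∈ (univ : Finset α).diag, F (swap p.1 p.2) = Fintype.card α * F 1 := by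
    simp [sum_diag, ← Perm.one_def]
  rw [← Fintype.sum_prod_type' fun x y => F (swap x y), ← hoffDiag, ← hdiag, add_comm,
    ← sum_union (disjoint_diag_offDiag _), diag_union_offDiag, univ_product_univ]

variable [CommRing R] {a b c : α}

lemma sum_swap_of_ne (h : α → α → α → R) (hab : a ≠ b) (hac : a ≠ c) (hbc : b ≠ c) {x : α}
    (hxa : x ≠ a) (hxb : x ≠ b) (hxc : x ≠ c) :
    ∑ y, h (swap x y a) (swap x y b) (swap x y c) =
      (Fintype.card α - 3) * h a b c + h x b c + h a x c + h a b x := by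
  rw [sum_eq_sum_add_of_agree_off_triple (g := fun _ => h a b c) hab hac hbc]
  · simp only [sum_const, card_univ, nsmul_eq_mul, swap_apply_right, ne_eq, not_false_eq_true,
      Ne.symm, swap_apply_of_ne_of_ne, hxb, hab, hxc, hac, hxa, hbc]
    ring
  · intro y hya hyb hyc
    simp [swap_apply_of_ne_of_ne, *, Ne.symm]

lemma sum_swap_self (h : α → α → α → R) (hab : a ≠ b) (hac : a ≠ c) (hbc : b ≠ c) :
    ∑ y, h (swap a y a) (swap a y b) (swap a y c) =
      ∑ y, h y b c + (h b a c - h b b c) + (h c b a - h c b c) := by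
  rw [sum_eq_sum_add_of_agree_off_triple (g := fun y => h y b c) hab hac hbc]
  · simp [swap_apply_of_ne_of_ne, *, Ne.symm]
  · intro y _ hyb hyc
    simp [swap_apply_of_ne_of_ne, *, Ne.symm]

lemma sum_sum_swap_triple (h : α → α → α → R) (hab : a ≠ b) (hac : a ≠ c) (hbc : b ≠ c) :
    ∑ x, ∑ y, h (swap x y a) (swap x y b) (swap x y c) =
      ((Fintype.card α : R) ^ 2 - 6 * Fintype.card α + 6) * h a b c
      + 2 * (h b a c + h a c b + h c b a)
      + 2 * (∑ y, h y b c + ∑ y, h a y c + ∑ y, h a b y)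
      - 2 * (h b b c + h c b c + h a a c + h a c c + h a b a + h a b b) := by
  have hb := sum_swap_self (fun y x z => h x y z) hab.symm hbc hac
  have hc := sum_swap_self (fun z x y => h x y z) hac.symm hbc.symm hab
  rw [sum_eq_sum_add_of_agree_off_triple hab hac hbc
    fun x hxa hxb hxc => sum_swap_of_ne h hab hac hbc hxa hxb hxc,
    sum_swap_self h hab hac hbc, hb, hc]
  simp only [sum_add_distrib, sum_const, card_univ, nsmul_eq_mul]
  ring

end Transpositions

section TripleFunctions

variable {α R : Type*} [Fintype α] [DecidableEq α] [Field R] [CharZero R]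

lemma walkOperator_transpositions_triple (h : α → α → α → R) (e : Fin 3 ↪ α) :
    walkOperator R (Fin 3 ↪ α) (transpositions α) (fun e => h (e 0) (e 1) (e 2)) e =
      ((Fintype.card α : R) - 1) * (Fintype.card α - 6) / 2 * h (e 0) (e 1) (e 2)
      + (h (e 1) (e 0) (e 2) + h (e 0) (e 2) (e 1) + h (e 2) (e 1) (e 0))
      + (∑ y, h y (e 1) (e 2) + ∑ y, h (e 0) y (e 2) + ∑ y, h (e 0) (e 1) y)
      - (h (e 1) (e 1) (e 2) + h (e 2) (e 1) (e 2) + h (e 0) (e 0) (e 2) + h (e 0) (e 2) (e 2)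
        + h (e 0) (e 1) (e 0) + h (e 0) (e 1) (e 1)) := by
  have hne : ∀ {i j : Fin 3}, i ≠ j → e i ≠ e j := e.injective.ne
  have hall := sum_sum_swap_triple h (hne (i := 0) (j := 1) (by decide))
    (hne (j := 2) (by decide)) (hne (by decide))
  rw [sum_sum_swap fun π => h (π (e 0)) (π (e 1)) (π (e 2))] at hall
  simp only [walkOperator_apply, Function.Embedding.smul_apply, Perm.smul_def]
  simp only [Perm.one_apply] at hall
  linear_combination hall / 2

end TripleFunctions

section OrderSign

variable {α : Type*} [LinearOrder α]

/-- The sign of `b - a`, for elements of a linear order. -/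
noncomputable def orderSign (a b : α) : ℝ := if a < b then 1 else if b < a then -1 else 0

lemma orderSign_self (a : α) : orderSign a a = 0 := by simp [orderSign]

lemma orderSign_of_lt {a b : α} (h : a < b) : orderSign a b = 1 := if_pos h

lemma orderSign_swap (a b : α) : orderSign b a = -orderSign a b := by
  rcases lt_trichotomy a b with h | h | h <;> simp [orderSign, h, h.not_gt]

lemma orderSign_mul_self {a b : α} (h : a ≠ b) : orderSign a b * orderSign a b = 1 := by
  rcases lt_or_gt_of_ne h with h | h <;> simp [orderSign, h, h.not_gt]

lemma orderSign_mul_orderSign {a c : α} (h : a ≠ c) (y : α) :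
    orderSign a y * orderSign y c =
      -1 + orderSign a c * orderSign y c + orderSign a c * orderSign a y := by
  unfold orderSign
  grind

end OrderSign

section CenteredRank

variable {n : ℕ}

/-- The position of `a` in `Fin n`, rescaled to be antisymmetric under reversal of the order. -/
noncomputable def centeredRank (a : Fin n) : ℝ := 2 * (a : ℕ) + 1 - n

lemma sum_range_eq_sum_fin_ite {N : Type*} [AddCommMonoid N] {k : ℕ} (hk : k ≤ n) (G : ℕ → N) :
    ∑ j ∈ range k, G j = ∑ j : Fin n, if (j : ℕ) < k then G j else 0 := by
  rw [Fin.sum_univ_eq_sum_range fun j => if j < k then G j else 0, ← sum_filter]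
  congr 1
  grind

lemma sum_orderSign_mul (b : Fin n) (G : ℕ → ℝ) :
    ∑ y : Fin n, orderSign y b * G y =
      2 * ∑ y ∈ range b, G y + G b - ∑ y ∈ range n, G y := by
  have hat : G b = ∑ y : Fin n, if y = b then G y else 0 := by simp
  rw [sum_range_eq_sum_fin_ite b.2.le, hat]
  simp only [← Fin.sum_univ_eq_sum_range, mul_sum, ← sum_add_distrib, ← sum_sub_distrib]
  refine sum_congr rfl fun y _ => ?_
  simp only [orderSign, Fin.lt_def]
  grind

lemma sum_range_odd_sub (N : ℝ) (m : ℕ) :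
    ∑ y ∈ range m, (2 * (y : ℝ) + 1 - N) = m ^ 2 - N * m :=
  sum_range_induction _ (fun m : ℕ => (m : ℝ) ^ 2 - N * m) (by simp) _
    fun k _ => by push_cast; ring

lemma sum_range_odd_sub_sq (N : ℝ) (m : ℕ) :
    ∑ y ∈ range m, (2 * (y : ℝ) + 1 - N) ^ 2 =
      m * (4 * m ^ 2 - 1) / 3 - 2 * N * m ^ 2 + N ^ 2 * m :=
  sum_range_induction _
    (fun m : ℕ => (m : ℝ) * (4 * m ^ 2 - 1) / 3 - 2 * N * m ^ 2 + N ^ 2 * m) (by simp) _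
    fun k _ => by push_cast; ring

lemma sum_centeredRank : ∑ y : Fin n, centeredRank y = 0 := by
  simp only [centeredRank]
  rw [Fin.sum_univ_eq_sum_range fun i => 2 * (i : ℝ) + 1 - n, sum_range_odd_sub]
  ring

lemma sum_orderSign_left (b : Fin n) : ∑ y : Fin n, orderSign y b = centeredRank b := by
  have h := sum_orderSign_mul b fun _ => 1
  simpa [centeredRank] using h

lemma sum_orderSign_right (b : Fin n) : ∑ y : Fin n, orderSign b y = -centeredRank b := by
  simp only [orderSign_swap _ b, sum_neg_distrib, sum_orderSign_left]

lemma sum_orderSign_mul_centeredRank (b : Fin n) :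
    ∑ y : Fin n, orderSign y b * centeredRank y = (centeredRank b ^ 2 - n ^ 2 + 1) / 2 := by
  simp only [centeredRank]
  rw [sum_orderSign_mul b fun y => 2 * (y : ℝ) + 1 - n, sum_range_odd_sub, sum_range_odd_sub]
  ring

lemma sum_orderSign_mul_orderSign {a c : Fin n} (h : a ≠ c) :
    ∑ y : Fin n, orderSign a y * orderSign y c =
      orderSign a c * (centeredRank c - centeredRank a) - n := by
  simp only [orderSign_mul_orderSign h, sum_add_distrib, ← mul_sum, sum_orderSign_left,
    sum_orderSign_right, sum_const, card_univ, Fintype.card_fin, nsmul_eq_mul]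
  ring

/-- The distance between the centered ranks of `a` and `b`. -/
noncomputable def rankDist (a b : Fin n) : ℝ := orderSign a b * (centeredRank b - centeredRank a)

/-- The sum of the centered ranks of `a` and `b`, made antisymmetric by the sign of `b - a`. -/
noncomputable def signedRankSum (a b : Fin n) : ℝ :=
  orderSign a b * (centeredRank a + centeredRank b)

lemma rankDist_self (a : Fin n) : rankDist a a = 0 := by simp [rankDist]

lemma rankDist_comm (a b : Fin n) : rankDist b a = rankDist a b := by
  rw [rankDist, rankDist, orderSign_swap]
  ring

lemma signedRankSum_self (a : Fin n) : signedRankSum a a = 0 := by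
  simp [signedRankSum, orderSign_self]

lemma signedRankSum_swap (a b : Fin n) : signedRankSum b a = -signedRankSum a b := by
  rw [signedRankSum, signedRankSum, orderSign_swap]
  ring

lemma sum_rankDist_left (b : Fin n) :
    ∑ y, rankDist y b = (centeredRank b ^ 2 + n ^ 2 - 1) / 2 := by
  simp only [rankDist, mul_sub, sum_sub_distrib, ← sum_mul, sum_orderSign_left,
    sum_orderSign_mul_centeredRank]
  ring

lemma sum_rankDist_right (b : Fin n) :
    ∑ y, rankDist b y = (centeredRank b ^ 2 + n ^ 2 - 1) / 2 := by
  simp only [rankDist_comm _ b, sum_rankDist_left]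

lemma sum_signedRankSum_left (b : Fin n) :
    ∑ y, signedRankSum y b = (3 * centeredRank b ^ 2 - n ^ 2 + 1) / 2 := by
  simp only [signedRankSum, mul_add, sum_add_distrib, ← sum_mul, sum_orderSign_left,
    sum_orderSign_mul_centeredRank]
  ring

lemma sum_signedRankSum_right (b : Fin n) :
    ∑ y, signedRankSum b y = -((3 * centeredRank b ^ 2 - n ^ 2 + 1) / 2) := by
  simp only [signedRankSum_swap _ b, sum_neg_distrib, sum_signedRankSum_left]

end CenteredRank

section TripleStatistics

variable (n : ℕ)

/-- The unnormalised random transposition walk on ordered triples of distinct elements of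
`Fin n`. -/
noncomputable def transpositionWalk : Module.End ℝ ((Fin 3 ↪ Fin n) → ℝ) :=
  walkOperator ℝ (Fin 3 ↪ Fin n) (transpositions (Fin n))

/-- The difference of the centered ranks of the last and first entries of a triple. -/
noncomputable def rankGap (e : Fin 3 ↪ Fin n) : ℝ := centeredRank (e 2) - centeredRank (e 0)

/-- The second difference of the squared centered ranks along a triple, up to sign. -/
noncomputable def rankSqDefect (e : Fin 3 ↪ Fin n) : ℝ :=
  2 * centeredRank (e 1) ^ 2 - centeredRank (e 0) ^ 2 - centeredRank (e 2) ^ 2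

/-- The sum of the signs of the two consecutive steps of a triple. -/
noncomputable def signSum (e : Fin 3 ↪ Fin n) : ℝ := orderSign (e 0) (e 1) + orderSign (e 1) (e 2)

/-- The product of the signs of the two consecutive steps of a triple: `1` on monotone triples and
`-1` on all others. -/
noncomputable def signProd (e : Fin 3 ↪ Fin n) : ℝ := orderSign (e 0) (e 1) * orderSign (e 1) (e 2)

/-- Twice the rank distance between the outer entries of a triple minus the two consecutive ones;
the weights make the contributions independent of the triple cancel under the walk. -/
noncomputable def distDefect (e : Fin 3 ↪ Fin n) : ℝ :=
  2 * rankDist (e 0) (e 2) - rankDist (e 0) (e 1) - rankDist (e 1) (e 2)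

/-- The difference of the signed rank sums of the two consecutive steps of a triple. -/
noncomputable def signedRankSumDiff (e : Fin 3 ↪ Fin n) : ℝ :=
  signedRankSum (e 1) (e 2) - signedRankSum (e 0) (e 1)

lemma transpositionWalk_one :
    transpositionWalk n 1 = ((n : ℝ) * (n - 1) / 2) • (1 : (Fin 3 ↪ Fin n) → ℝ) := by
  ext e
  refine (walkOperator_transpositions_triple (fun _ _ _ => 1) e).trans ?_
  simp only [sum_const, card_univ, Fintype.card_fin, nsmul_eq_mul, Pi.smul_apply, Pi.one_apply,
    smul_eq_mul]
  ring

lemma transpositionWalk_rankGap :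
    transpositionWalk n (rankGap n) = ((n : ℝ) * (n - 3) / 2) • rankGap n := by
  ext e
  refine (walkOperator_transpositions_triple
    (fun a _ c => centeredRank c - centeredRank a) e).trans ?_
  simp only [sum_sub_distrib, sum_centeredRank, sum_const, card_univ, Fintype.card_fin,
    nsmul_eq_mul, Pi.smul_apply, smul_eq_mul, rankGap]
  ring

lemma transpositionWalk_rankSqDefect :
    transpositionWalk n (rankSqDefect n) = ((n : ℝ) * (n - 3) / 2) • rankSqDefect n := by
  ext e
  refine (walkOperator_transpositions_triple
    (fun a b c => 2 * centeredRank b ^ 2 - centeredRank a ^ 2 - centeredRank c ^ 2) e).trans ?_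
  simp only [sum_sub_distrib, ← mul_sum, sum_const, card_univ, Fintype.card_fin,
    nsmul_eq_mul, Pi.smul_apply, smul_eq_mul, rankSqDefect]
  ring

lemma transpositionWalk_signSum :
    transpositionWalk n (signSum n) = ((n : ℝ) * (n - 5) / 2) • signSum n + rankGap n := by
  ext e
  refine (walkOperator_transpositions_triple
    (fun a b c => orderSign a b + orderSign b c) e).trans ?_
  simp only [sum_add_distrib, sum_orderSign_left, sum_orderSign_right, sum_const, card_univ,
    Fintype.card_fin, nsmul_eq_mul, orderSign_self, orderSign_swap (e 0) (e 1),
    orderSign_swap (e 1) (e 2), Pi.add_apply, Pi.smul_apply, smul_eq_mul, signSum, rankGap]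
  ring

lemma transpositionWalk_distDefect :
    transpositionWalk n (distDefect n) =
      ((n - 1 : ℝ) * (n - 4) / 2) • distDefect n - (1 / 2 : ℝ) • rankSqDefect n := by
  ext e
  refine (walkOperator_transpositions_triple
    (fun a b c => 2 * rankDist a c - rankDist a b - rankDist b c) e).trans ?_
  simp only [sum_sub_distrib, ← mul_sum, sum_rankDist_left, sum_rankDist_right, sum_const,
    card_univ, Fintype.card_fin, nsmul_eq_mul, rankDist_self, rankDist_comm (e 0) (e 1),
    rankDist_comm (e 1) (e 2), rankDist_comm (e 0) (e 2), Pi.sub_apply, Pi.smul_apply,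
    smul_eq_mul, distDefect, rankSqDefect]
  ring

lemma transpositionWalk_signedRankSumDiff :
    transpositionWalk n (signedRankSumDiff n) =
      ((n : ℝ) * (n - 5) / 2) • signedRankSumDiff n - (3 / 2 : ℝ) • rankSqDefect n := by
  ext e
  refine (walkOperator_transpositions_triple
    (fun a b c => signedRankSum b c - signedRankSum a b) e).trans ?_
  simp only [sum_sub_distrib, sum_signedRankSum_left, sum_signedRankSum_right, sum_const,
    card_univ, Fintype.card_fin, nsmul_eq_mul, signedRankSum_self, signedRankSum_swap (e 0) (e 1),
    signedRankSum_swap (e 1) (e 2), Pi.sub_apply, Pi.smul_apply, smul_eq_mul, signedRankSumDiff,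
    rankSqDefect]
  ring

lemma transpositionWalk_signProd :
    transpositionWalk n (signProd n) =
      ((n - 1 : ℝ) * (n - 6) / 2) • signProd n - (n - 1 : ℝ) • 1
        + (1 / 2 : ℝ) • (distDefect n + signedRankSumDiff n) := by
  ext e
  have h01 : e 0 ≠ e 1 := e.injective.ne (by decide)
  have h02 : e 0 ≠ e 2 := e.injective.ne (by decide)
  have h12 : e 1 ≠ e 2 := e.injective.ne (by decide)
  refine (walkOperator_transpositions_triple
    (fun a b c => orderSign a b * orderSign b c) e).trans ?_
  simp only [← sum_mul, ← mul_sum, sum_orderSign_left, sum_orderSign_right,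
    sum_orderSign_mul_orderSign h02, Fintype.card_fin, orderSign_self,
    orderSign_swap (e 0) (e 1), orderSign_swap (e 1) (e 2),
    Pi.add_apply, Pi.sub_apply, Pi.smul_apply, Pi.one_apply, smul_eq_mul, signProd, distDefect,
    signedRankSumDiff, rankDist, signedRankSum]
  linear_combination orderSign_mul_orderSign h02 (e 1) + orderSign_mul_self h01
    + orderSign_mul_self h12

end TripleStatistics

section Eigenvectors

variable (n : ℕ)

/-- Eigenvector of the transposition walk for the eigenvalue `n (n - 5) / 2`, built from signs. -/
noncomputable def signEigenvector : (Fin 3 ↪ Fin n) → ℝ := (n : ℝ) • signSum n - rankGap n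

/-- Eigenvector of the transposition walk for the eigenvalue `n (n - 5) / 2`, built from signed rank
sums. -/
noncomputable def rankSumEigenvector : (Fin 3 ↪ Fin n) → ℝ :=
  (2 * n : ℝ) • signedRankSumDiff n + (3 : ℝ) • rankSqDefect n

/-- Eigenvector of the transposition walk for the eigenvalue `(n - 1) (n - 4) / 2`, built from rank
distances. -/
noncomputable def distEigenvector : (Fin 3 ↪ Fin n) → ℝ :=
  (2 * (n - 2) : ℝ) • distDefect n + rankSqDefect n

/-- The sign product with every component removed except the one along `rankSumEigenvector`, which
could only be split off by dividing by the eigenvalue gap `n - 3`. -/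
noncomputable def signProdCorrected : (Fin 3 ↪ Fin n) → ℝ :=
  signProd n + (1 / 3 : ℝ) • 1 - (1 / (4 * (n - 1) * (n - 2)) : ℝ) • distEigenvector n
    + (1 / (2 * n * (n - 2)) : ℝ) • rankSqDefect n

lemma transpositionWalk_signEigenvector :
    transpositionWalk n (signEigenvector n) = ((n : ℝ) * (n - 5) / 2) • signEigenvector n := by
  simp only [signEigenvector, map_sub, map_smul, transpositionWalk_signSum,
    transpositionWalk_rankGap]
  module

lemma transpositionWalk_rankSumEigenvector :
    transpositionWalk n (rankSumEigenvector n) =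
      ((n : ℝ) * (n - 5) / 2) • rankSumEigenvector n := by
  simp only [rankSumEigenvector, map_add, map_smul, transpositionWalk_signedRankSumDiff,
    transpositionWalk_rankSqDefect]
  module

lemma transpositionWalk_distEigenvector :
    transpositionWalk n (distEigenvector n) =
      ((n - 1 : ℝ) * (n - 4) / 2) • distEigenvector n := by
  simp only [distEigenvector, map_add, map_smul, transpositionWalk_distDefect,
    transpositionWalk_rankSqDefect]
  module

variable {n}

lemma natCast_sub_ne_zero_of_three_le (hn : 3 ≤ n) :
    (n : ℝ) ≠ 0 ∧ (n - 1 : ℝ) ≠ 0 ∧ (n - 2 : ℝ) ≠ 0 := by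
  have hn' : (3 : ℝ) ≤ n := mod_cast hn
  refine ⟨?_, ?_, ?_⟩ <;> linarith

lemma transpositionWalk_signProdCorrected (hn : 3 ≤ n) :
    transpositionWalk n (signProdCorrected n) =
      ((n - 1 : ℝ) * (n - 6) / 2) • signProdCorrected n
        + (1 / (4 * n) : ℝ) • rankSumEigenvector n := by
  obtain ⟨hn0, hn1, hn2⟩ := natCast_sub_ne_zero_of_three_le hn
  simp only [signProdCorrected, map_add, map_sub, map_smul, transpositionWalk_signProd,
    transpositionWalk_one, transpositionWalk_distEigenvector, transpositionWalk_rankSqDefect]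
  simp only [rankSumEigenvector, distEigenvector]
  match_scalars <;> field_simp <;> ring

end Eigenvectors

section Pattern

variable (n : ℕ)

/-- The indicator function of increasing triples, that is, of occurrences of the pattern 123. -/
noncomputable def pattern123 (e : Fin 3 ↪ Fin n) : ℝ := if e 0 < e 1 ∧ e 1 < e 2 then 1 else 0

lemma pattern123_eq_signs : pattern123 n = (1 / 4 : ℝ) • (1 + signSum n + signProd n) := by
  ext e
  have h01 : e 0 ≠ e 1 := e.injective.ne (by decide)
  have h12 : e 1 ≠ e 2 := e.injective.ne (by decide)
  simp only [pattern123, signSum, signProd, orderSign, Pi.smul_apply, Pi.add_apply, Pi.one_apply,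
    smul_eq_mul]
  grind

variable {n}

lemma pattern123_eq_eigenvectors (hn : 3 ≤ n) :
    pattern123 n = (1 / 6 : ℝ) • 1 + (1 / (4 * n) : ℝ) • rankGap n
      - (1 / (8 * n * (n - 2)) : ℝ) • rankSqDefect n
      + (1 / (16 * (n - 1) * (n - 2)) : ℝ) • distEigenvector n
      + (1 / (4 * n) : ℝ) • signEigenvector n + (1 / 4 : ℝ) • signProdCorrected n := by
  obtain ⟨hn0, hn1, hn2⟩ := natCast_sub_ne_zero_of_three_le hn
  rw [pattern123_eq_signs]
  simp only [signEigenvector, signProdCorrected]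
  match_scalars <;> field_simp <;> ring

lemma transpositionWalk_pow_pattern123 (hn : 3 ≤ n) (t : ℕ) :
    (transpositionWalk n ^ t) (pattern123 n) =
      ((n : ℝ) * (n - 1) / 2) ^ t • (1 / 6 : ℝ) • 1
      + ((n : ℝ) * (n - 3) / 2) ^ t • ((1 / (4 * n) : ℝ) • rankGap n
          - (1 / (8 * n * (n - 2)) : ℝ) • rankSqDefect n)
      + ((n - 1 : ℝ) * (n - 4) / 2) ^ t • (1 / (16 * (n - 1) * (n - 2)) : ℝ) • distEigenvector n
      + ((n : ℝ) * (n - 5) / 2) ^ t • (1 / (4 * n) : ℝ) • signEigenvector n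
      + ((n - 1 : ℝ) * (n - 6) / 2) ^ t • (1 / 4 : ℝ) • signProdCorrected n
      + (1 / (16 * n) : ℝ) • (∑ i ∈ range t,
          ((n - 1 : ℝ) * (n - 6) / 2) ^ i * ((n : ℝ) * (n - 5) / 2) ^ (t - 1 - i)) •
            rankSumEigenvector n := by
  have hcoupled := pow_apply_of_apply_eq_smul_add (transpositionWalk_signProdCorrected hn)
    (by rw [map_smul, transpositionWalk_rankSumEigenvector, smul_comm]) t
  rw [pattern123_eq_eigenvectors hn]
  simp only [map_add, map_sub, map_smul, hcoupled,
    pow_apply_of_apply_eq_smul (transpositionWalk_one n),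
    pow_apply_of_apply_eq_smul (transpositionWalk_rankGap n),
    pow_apply_of_apply_eq_smul (transpositionWalk_rankSqDefect n),
    pow_apply_of_apply_eq_smul (transpositionWalk_distEigenvector n),
    pow_apply_of_apply_eq_smul (transpositionWalk_signEigenvector n)]
  module

end Pattern

section IncreasingTriples

/-- The embedding of `Fin 3` listing a strictly increasing triple. -/
def increasingEmbedding {α : Type*} [Preorder α]
    (x : {x : α × α × α // x.1 < x.2.1 ∧ x.2.1 < x.2.2}) : Fin 3 ↪ α where
  toFun := ![x.1.1, x.1.2.1, x.1.2.2]
  inj' := StrictMono.injective <| Fin.strictMono_iff_lt_succ.mpr <| by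
    simpa [Fin.forall_fin_two] using x.2

/-- The linear functional summing a function over all strictly increasing triples. -/
noncomputable def sumIncreasing (n : ℕ) : ((Fin 3 ↪ Fin n) → ℝ) →ₗ[ℝ] ℝ :=
  ∑ x, LinearMap.proj (increasingEmbedding x)

variable {n : ℕ}

lemma sumIncreasing_apply (f : (Fin 3 ↪ Fin n) → ℝ) :
    sumIncreasing n f = ∑ x, f (increasingEmbedding x) := by
  simp [sumIncreasing]

lemma sumIncreasing_congr {f g : (Fin 3 ↪ Fin n) → ℝ}
    (h : ∀ e : Fin 3 ↪ Fin n, e 0 < e 1 → e 1 < e 2 → f e = g e) :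
    sumIncreasing n f = sumIncreasing n g := by
  simp only [sumIncreasing_apply]
  exact sum_congr rfl fun x _ => h _ x.2.1 x.2.2

lemma sumIncreasing_eq_sum_range (h : ℕ → ℕ → ℕ → ℝ) :
    sumIncreasing n (fun e => h (e 0) (e 1) (e 2)) =
      ∑ k ∈ range n, ∑ j ∈ range k, ∑ i ∈ range j, h i j k := by
  calc sumIncreasing n (fun e => h (e 0) (e 1) (e 2))
      = ∑ x : Fin n × Fin n × Fin n with x.1 < x.2.1 ∧ x.2.1 < x.2.2, h x.1 x.2.1 x.2.2 := by
        rw [sumIncreasing_apply]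
        exact (sum_subtype _ (by simp)
          fun x : Fin n × Fin n × Fin n => h x.1 x.2.1 x.2.2).symm
    _ = ∑ k : Fin n, ∑ j : Fin n, ∑ i : Fin n, if i < j ∧ j < k then h i j k else 0 := by
        simp only [sum_filter, Fintype.sum_prod_type]
        rw [sum_comm, sum_congr rfl fun j _ => sum_comm]
        exact sum_comm
    _ = ∑ k ∈ range n, ∑ j ∈ range k, ∑ i ∈ range j, h i j k := by
        rw [← Fin.sum_univ_eq_sum_range fun k => ∑ j ∈ range k, ∑ i ∈ range j, h i j k]
        refine sum_congr rfl fun k _ => ?_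
        rw [sum_range_eq_sum_fin_ite k.2.le]
        refine sum_congr rfl fun j _ => ?_
        rw [sum_range_eq_sum_fin_ite j.2.le]
        by_cases hjk : j < k <;> simp [hjk]

lemma sumIncreasing_one : sumIncreasing n 1 = n * (n - 1) * (n - 2) / 6 := by
  have hpairs : ∀ k : ℕ, ∑ j ∈ range k, (j : ℝ) = k * (k - 1) / 2 := fun k =>
    sum_range_induction _ (fun k : ℕ => (k : ℝ) * (k - 1) / 2) (by simp) k
      fun j _ => by push_cast; ring
  refine (sumIncreasing_eq_sum_range fun _ _ _ => 1).trans ?_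
  simp only [sum_const, card_range, nsmul_eq_mul, mul_one, hpairs]
  exact sum_range_induction _ (fun m : ℕ => (m : ℝ) * (m - 1) * (m - 2) / 6) (by simp) n
    fun k _ => by push_cast; ring

lemma sumIncreasing_rankGap :
    sumIncreasing n (rankGap n) = (n + 1) * n * (n - 1) * (n - 2) / 6 := by
  have hinner : ∀ k j : ℕ, ∑ i ∈ range j, ((2 * (k : ℝ) + 1 - n) - (2 * (i : ℝ) + 1 - n)) =
      2 * k * j - j * (j - 1) := fun k j => by
    rw [sum_sub_distrib, sum_range_odd_sub, sum_const, card_range, nsmul_eq_mul]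
    ring
  have hmiddle : ∀ k m : ℕ, ∑ j ∈ range m, (2 * (k : ℝ) * j - j * (j - 1)) =
      k * m * (m - 1) - m * (m - 1) * (m - 2) / 3 := fun k m =>
    sum_range_induction _
      (fun m : ℕ => (k : ℝ) * m * (m - 1) - m * (m - 1) * (m - 2) / 3) (by simp) m
      fun j _ => by push_cast; ring
  refine (sumIncreasing_eq_sum_range
    fun i _ k => (2 * (k : ℝ) + 1 - n) - (2 * (i : ℝ) + 1 - n)).trans ?_
  simp only [hinner, hmiddle]
  exact sum_range_induction _ (fun m : ℕ => ((m : ℝ) + 1) * m * (m - 1) * (m - 2) / 6) (by simp) n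
    fun k _ => by push_cast; ring

lemma sumIncreasing_signSum : sumIncreasing n (signSum n) = 2 * sumIncreasing n 1 := by
  rw [← smul_eq_mul, ← map_smul]
  refine sumIncreasing_congr fun e h01 h12 => ?_
  simp only [signSum, orderSign_of_lt, h01, h12, Pi.smul_apply, Pi.one_apply, smul_eq_mul]
  norm_num

lemma sumIncreasing_signProd : sumIncreasing n (signProd n) = sumIncreasing n 1 :=
  sumIncreasing_congr fun e h01 h12 => by simp [signProd, orderSign_of_lt, h01, h12]

lemma sumIncreasing_distDefect : sumIncreasing n (distDefect n) = sumIncreasing n (rankGap n) :=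
  sumIncreasing_congr fun e h01 h12 => by
    simp only [distDefect, rankDist, rankGap, orderSign_of_lt, h01, h12, h01.trans h12]
    ring

lemma sumIncreasing_signedRankSumDiff :
    sumIncreasing n (signedRankSumDiff n) = sumIncreasing n (rankGap n) :=
  sumIncreasing_congr fun e h01 h12 => by
    simp only [signedRankSumDiff, signedRankSum, rankGap, orderSign_of_lt, h01, h12]
    ring

lemma sumIncreasing_rankSqDefect :
    sumIncreasing n (rankSqDefect n) = -((n + 2) * (n + 1) * n * (n - 1) * (n - 2) / 15) := by
  have hinner : ∀ k j : ℕ, ∑ i ∈ range j,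
      (2 * (2 * (j : ℝ) + 1 - n) ^ 2 - (2 * (i : ℝ) + 1 - n) ^ 2 - (2 * (k : ℝ) + 1 - n) ^ 2) =
      20 / 3 * (j : ℝ) ^ 3 + (8 - 6 * n) * j ^ 2
        + (2 * (1 - n) ^ 2 + 1 / 3 - n ^ 2 - (2 * k + 1 - n) ^ 2) * j := fun k j => by
    rw [sum_sub_distrib, sum_sub_distrib, sum_range_odd_sub_sq]
    simp only [sum_const, card_range, nsmul_eq_mul]
    ring
  have hmiddle : ∀ (A B C : ℝ) (m : ℕ), ∑ j ∈ range m, (A * (j : ℝ) ^ 3 + B * j ^ 2 + C * j) =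
      A * (m * (m - 1) / 2) ^ 2 + B * ((m - 1) * m * (2 * m - 1) / 6) + C * (m * (m - 1) / 2) :=
    fun A B C m => sum_range_induction _
      (fun m : ℕ => A * ((m : ℝ) * (m - 1) / 2) ^ 2 + B * ((m - 1) * m * (2 * m - 1) / 6)
        + C * (m * (m - 1) / 2)) (by simp) m
      fun j _ => by push_cast; ring
  have houter : ∀ (N : ℝ) (m : ℕ), ∑ k ∈ range m,
      (20 / 3 * ((k : ℝ) * (k - 1) / 2) ^ 2 + (8 - 6 * N) * ((k - 1) * k * (2 * k - 1) / 6)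
        + (2 * (1 - N) ^ 2 + 1 / 3 - N ^ 2 - (2 * k + 1 - N) ^ 2) * (k * (k - 1) / 2)) =
      -(((m : ℝ) + 2) * (m + 1) * m * (m - 1) * (m - 2) / 15) := fun N m =>
    sum_range_induction _
      (fun m : ℕ => -(((m : ℝ) + 2) * (m + 1) * m * (m - 1) * (m - 2) / 15)) (by simp) m
      fun k _ => by push_cast; ring
  refine (sumIncreasing_eq_sum_range fun i j k => 2 * (2 * (j : ℝ) + 1 - n) ^ 2
    - (2 * (i : ℝ) + 1 - n) ^ 2 - (2 * (k : ℝ) + 1 - n) ^ 2).trans ?_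
  simp only [hinner, hmiddle, houter]

lemma sumIncreasing_signEigenvector :
    sumIncreasing n (signEigenvector n) = n * (n - 1) ^ 2 * (n - 2) / 6 := by
  simp only [signEigenvector, map_sub, map_smul, smul_eq_mul, sumIncreasing_signSum,
    sumIncreasing_one, sumIncreasing_rankGap]
  ring

lemma sumIncreasing_rankSumEigenvector :
    sumIncreasing n (rankSumEigenvector n) =
      2 * (n + 1) * n * (n - 1) * (n - 2) * (n - 3) / 15 := by
  simp only [rankSumEigenvector, map_add, map_smul, smul_eq_mul, sumIncreasing_signedRankSumDiff,
    sumIncreasing_rankGap, sumIncreasing_rankSqDefect]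
  ring

-- The factor `n - 3` of the total cancels the gap `n - 3` between the two eigenvalues, so the
-- coinciding eigenvalues at `n = 3` need no separate treatment.
lemma geom_sum_mul_sumIncreasing_rankSumEigenvector (t : ℕ) :
    (∑ i ∈ range t, ((n - 1 : ℝ) * (n - 6) / 2) ^ i * ((n : ℝ) * (n - 5) / 2) ^ (t - 1 - i)) *
        sumIncreasing n (rankSumEigenvector n) =
      2 * (n + 1) * n * (n - 1) * (n - 2) / 15 *
        (((n : ℝ) * (n - 5) / 2) ^ t - ((n - 1 : ℝ) * (n - 6) / 2) ^ t) := by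
  rw [sumIncreasing_rankSumEigenvector]
  linear_combination -(2 * (n + 1) * n * (n - 1) * (n - 2) / 15 : ℝ) *
    geom_sum₂_mul ((n - 1 : ℝ) * (n - 6) / 2) ((n : ℝ) * (n - 5) / 2) t

lemma sumIncreasing_distEigenvector :
    sumIncreasing n (distEigenvector n) =
      4 * (n + 1) * n * (n - 1) * (n - 2) * (n - 3) / 15 := by
  simp only [distEigenvector, map_add, map_smul, smul_eq_mul, sumIncreasing_distDefect,
    sumIncreasing_rankGap, sumIncreasing_rankSqDefect]
  ring

lemma sumIncreasing_signProdCorrected (hn : 3 ≤ n) :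
    sumIncreasing n (signProdCorrected n) =
      (n - 3) * (11 * n ^ 2 - 21 * n - 2) / 90 := by
  obtain ⟨hn0, hn1, hn2⟩ := natCast_sub_ne_zero_of_three_le hn
  simp only [signProdCorrected, map_add, map_sub, map_smul, smul_eq_mul, sumIncreasing_signProd,
    sumIncreasing_one, sumIncreasing_distEigenvector, sumIncreasing_rankSqDefect]
  field_simp
  ring

lemma natCast_choose_three (n : ℕ) : (n.choose 3 : ℝ) = n * (n - 1) * (n - 2) / 6 := by
  rw [Nat.cast_choose_eq_descPochhammer_div]
  simp [descPochhammer_succ_right, Nat.factorial]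

lemma sumIncreasing_smul_pattern123 (σ : Perm (Fin n)) :
    sumIncreasing n (fun e => pattern123 n (σ • e)) =
      #{x : Fin n × Fin n × Fin n | x.1 < x.2.1 ∧ x.2.1 < x.2.2 ∧
        σ x.1 < σ x.2.1 ∧ σ x.2.1 < σ x.2.2} := by
  rw [sumIncreasing_apply]
  refine (sum_subtype {x : Fin n × Fin n × Fin n | x.1 < x.2.1 ∧ x.2.1 < x.2.2} (by simp)
    fun x => if σ x.1 < σ x.2.1 ∧ σ x.2.1 < σ x.2.2 then (1 : ℝ) else 0).symm.trans ?_
  rw [sum_boole, filter_filter]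
  simp only [and_assoc]

lemma sum_card_pattern123_eq (t : ℕ) :
    ∑ γ ∈ Fintype.piFinset (fun _ : Fin t => transpositions (Fin n)),
      (#{x : Fin n × Fin n × Fin n | x.1 < x.2.1 ∧ x.2.1 < x.2.2 ∧
        (List.ofFn γ).prod x.1 < (List.ofFn γ).prod x.2.1 ∧
        (List.ofFn γ).prod x.2.1 < (List.ofFn γ).prod x.2.2} : ℝ) =
      sumIncreasing n ((transpositionWalk n ^ t) (pattern123 n)) := by
  simp only [← sumIncreasing_smul_pattern123, sumIncreasing_apply, transpositionWalk,
    walkOperator_pow_apply]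
  exact sum_comm

lemma sumIncreasing_transpositionWalk_pow_pattern123 (hn : 3 ≤ n) (t : ℕ) :
    sumIncreasing n ((transpositionWalk n ^ t) (pattern123 n)) =
      (n : ℝ) * (n - 1) * (n - 2) / 36 * ((n : ℝ) * (n - 1) / 2) ^ t
      + ((n : ℝ) + 1) * (n - 1) * (3 * n - 4) / 60 * ((n : ℝ) * (n - 3) / 2) ^ t
      + ((n : ℝ) + 1) * n * (n - 3) / 60 * ((n - 1 : ℝ) * (n - 4) / 2) ^ t
      + (3 * (n : ℝ) - 2) * (n - 1) * (n - 2) / 60 * ((n : ℝ) * (n - 5) / 2) ^ t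
      + (n : ℝ) * (n - 2) * (n - 4) / 45 * ((n - 1 : ℝ) * (n - 6) / 2) ^ t := by
  obtain ⟨hn0, hn1, hn2⟩ := natCast_sub_ne_zero_of_three_le hn
  simp only [transpositionWalk_pow_pattern123 hn, map_add, map_sub, map_smul, smul_eq_mul,
    sumIncreasing_one, sumIncreasing_rankGap, sumIncreasing_rankSqDefect,
    sumIncreasing_distEigenvector, sumIncreasing_signEigenvector,
    sumIncreasing_signProdCorrected hn, geom_sum_mul_sumIncreasing_rankSumEigenvector]
  generalize ((n : ℝ) * (n - 1) / 2) ^ t = p₁, ((n : ℝ) * (n - 3) / 2) ^ t = p₂,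
    ((n - 1 : ℝ) * (n - 4) / 2) ^ t = p₃, ((n : ℝ) * (n - 5) / 2) ^ t = p₄,
    ((n - 1 : ℝ) * (n - 6) / 2) ^ t = p₅
  field_simp
  ring

end IncreasingTriples

theorem stmt19 (n : ℕ) (hn : 3 ≤ n) (t : ℕ) :
    (2 / ((n : ℝ) * ((n : ℝ) - 1))) ^ t *
      (∑ γ ∈ Fintype.piFinset fun _ : Fin t =>
          (Finset.univ.filter fun π : Equiv.Perm (Fin n) =>
            ∃ a b : Fin n, a ≠ b ∧ π = Equiv.swap a b),
        ((((Finset.univ : Finset (Fin n × Fin n × Fin n)).filter fun x =>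
            x.1 < x.2.1 ∧ x.2.1 < x.2.2 ∧
            (List.ofFn γ).prod x.1 < (List.ofFn γ).prod x.2.1 ∧
            (List.ofFn γ).prod x.2.1 < (List.ofFn γ).prod x.2.2).card : ℝ)))
    = (n.choose 3 : ℝ) / 6
      + ((n : ℝ) + 1) * ((n : ℝ) - 1) * (3 * (n : ℝ) - 4) / 60 *
          (1 - 2 / ((n : ℝ) - 1)) ^ t
      + ((n : ℝ) + 1) * (n : ℝ) * ((n : ℝ) - 3) / 60 * (1 - 4 / (n : ℝ)) ^ t
      + (3 * (n : ℝ) - 2) * ((n : ℝ) - 1) * ((n : ℝ) - 2) / 60 *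
          (1 - 4 / ((n : ℝ) - 1)) ^ t
      + (n : ℝ) * ((n : ℝ) - 2) * ((n : ℝ) - 4) / 45 * (1 - 6 / (n : ℝ)) ^ t := by
  obtain ⟨hn0, hn1, -⟩ := natCast_sub_ne_zero_of_three_le hn
  have hev₁ : 2 / ((n : ℝ) * (n - 1)) * (n * (n - 1) / 2) = 1 := by field_simp
  have hev₂ : 2 / ((n : ℝ) * (n - 1)) * (n * (n - 3) / 2) = 1 - 2 / (n - 1) := by
    field_simp; ring
  have hev₃ : 2 / ((n : ℝ) * (n - 1)) * ((n - 1) * (n - 4) / 2) = 1 - 4 / n := by field_simp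
  have hev₄ : 2 / ((n : ℝ) * (n - 1)) * (n * (n - 5) / 2) = 1 - 4 / (n - 1) := by
    field_simp; ring
  have hev₅ : 2 / ((n : ℝ) * (n - 1)) * ((n - 1) * (n - 6) / 2) = 1 - 6 / n := by field_simp
  have hone : (2 / ((n : ℝ) * (n - 1))) ^ t * (n * (n - 1) / 2 : ℝ) ^ t = 1 := by
    rw [← mul_pow, hev₁, one_pow]
  have htranspositions : ({π : Perm (Fin n) | ∃ a b, a ≠ b ∧ π = swap a b} : Finset _) =
      transpositions (Fin n) := by ext; simp [transpositions]
  rw [htranspositions, sum_card_pattern123_eq, sumIncreasing_transpositionWalk_pow_pattern123 hn,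
    natCast_choose_three, ← hev₂, ← hev₃, ← hev₄, ← hev₅, mul_pow, mul_pow, mul_pow, mul_pow]
  linear_combination (n * (n - 1) * (n - 2) / 36 : ℝ) * hone
end
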